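/- For every positive integer n, the following identity holds in the formal power series ring ℚ[[x_1, …, x_n]]: ∑_λ det((x_i^{λ_j + n − j})_{1≤i,j≤n}) · ∏_{i=1}^n (1 − x_i) · ∏_{1 ≤ i < j ≤ n} (1 − x_i x_j) = ∏_{1 ≤ i < j ≤ n} (x_i − x_j), where the sum is over all partitions λ = (λ_1 ≥ ⋯ ≥ λ_n ≥ 0) with at most n parts (the family is summable, since for each monomial only finitely many λ contribute). Equivalently (Littlewood): ∑_λ s_λ(x_1,…,x_n) = ∏_i 1/(1 − x_i) · ∏_{i<j} 1/(1 − x_i x_j). -/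

import Mathlib

/-!
Write a partition with at most `n + 1` parts as a partition with at most `n` parts plus a constant
`k`, its last part. The constant contributes a factor `(∏ i, x i) ^ k`, which sums to
`(1 - ∏ i, x i)⁻¹`, and expanding the alternant that remains along its last column, all of whose
entries are `1`, leaves alternants in the variables other than `x i`. By induction it remains to see
that the Vandermonde determinant with its last column replaced by
`(1 - x i) * ∏ j ≠ i, (1 - x i * x j)` is `1 - ∏ i, x i` times the Vandermonde determinant. These
entries are the values at the nodes `x i` of the polynomial
`(∏ j, (1 - x j * T) - ∏ j, (x j - T)) / (1 + T)`, so by column operations only its constant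
coefficient `1 - ∏ j, x j` matters.
-/

open Finset Polynomial

section ReflectionQuotient

variable {R ι : Type*} [CommRing R]

/-- The polynomial `(∏ (1 - x i * X) - ∏ (x i - X)) / (1 + X)`, which interpolates
`(1 - x i) * ∏ j ≠ i, (1 - x i * x j)` at the nodes `x i`. The divisor is written as `X - C (-1)`,
the form in which the library treats division by a root. -/
noncomputable def reflectionQuotient (s : Finset ι) (x : ι → R) : R[X] :=
  (∏ i ∈ s, (1 - C (x i) * X) - ∏ i ∈ s, (C (x i) - X)) /ₘ (X - C (-1))

theorem X_sub_C_mul_reflectionQuotient (s : Finset ι) (x : ι → R) :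
    (X - C (-1)) * reflectionQuotient s x =
      ∏ i ∈ s, (1 - C (x i) * X) - ∏ i ∈ s, (C (x i) - X) :=
  mul_divByMonic_eq_iff_isRoot.2 <| by simp [eval_prod, add_comm]

theorem eval_zero_reflectionQuotient (s : Finset ι) (x : ι → R) :
    (reflectionQuotient s x).eval 0 = 1 - ∏ i ∈ s, x i := by
  simpa [eval_prod] using congrArg (eval 0) (X_sub_C_mul_reflectionQuotient s x)

theorem natDegree_reflectionQuotient_le (s : Finset ι) (x : ι → R) :
    (reflectionQuotient s x).natDegree ≤ #s - 1 := by
  nontriviality R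
  have hprod (f : ι → R[X]) (hf : ∀ i ∈ s, (f i).natDegree ≤ 1) :
      (∏ i ∈ s, f i).natDegree ≤ #s :=
    (natDegree_prod_le s f).trans (by simpa using sum_le_card_nsmul s _ 1 hf)
  rw [reflectionQuotient, natDegree_divByMonic _ (monic_X_sub_C _), natDegree_X_sub_C]
  refine Nat.sub_le_sub_right (natDegree_sub_le_of_le ?_ ?_ |>.trans (max_self _).le) 1
  · exact hprod _ fun i _ => by compute_degree
  · exact hprod _ fun i _ => by compute_degree

theorem reflectionQuotient_cons {i : ι} {s : Finset ι} (hi : i ∉ s) (x : ι → R) :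
    reflectionQuotient (cons i s hi) x =
      (1 - C (x i) * X) * reflectionQuotient s x + (1 - C (x i)) * ∏ j ∈ s, (C (x j) - X) := by
  refine (monic_X_sub_C (-1 : R)).isRegular.left ?_
  dsimp only
  rw [X_sub_C_mul_reflectionQuotient, mul_add, mul_left_comm, X_sub_C_mul_reflectionQuotient,
    prod_cons, prod_cons, map_neg, map_one]
  ring

theorem eval_reflectionQuotient_cons {i : ι} {s : Finset ι} (hi : i ∉ s) (x : ι → R) :
    (reflectionQuotient (cons i s hi) x).eval (x i) =
      (1 - x i) * ∏ j ∈ s, (1 - x i * x j) := by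
  have h := congrArg (eval (x i)) (X_sub_C_mul_reflectionQuotient s x)
  simp only [eval_mul, eval_sub, eval_X, eval_C, eval_prod, eval_one] at h
  simp only [reflectionQuotient_cons, eval_add, eval_mul, eval_sub, eval_X, eval_C, eval_prod,
    eval_one, mul_comm (x i) (x _)]
  linear_combination (1 - x i) * h

end ReflectionQuotient

section Alternant

variable {R : Type*} [CommRing R] {n : ℕ}

/-- The matrix whose determinant is the bialternant numerator of the Schur function of `l`. With
`0`-indexed columns, the exponent `λ_j + n - j` becomes `l j + (n - 1 - j)`. -/
def alternantMatrix (x : Fin n → R) (l : Fin n → ℕ) : Matrix (Fin n) (Fin n) R :=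
  Matrix.of fun i j => x i ^ (l j + (n - 1 - (j : ℕ)))

theorem alternantMatrix_zero (x : Fin n → R) :
    alternantMatrix x 0 = Matrix.projVandermonde 1 x := by
  ext i j
  simp [alternantMatrix, Matrix.projVandermonde_apply, Fin.val_rev, Nat.sub_sub, add_comm]

theorem det_alternantMatrix_zero (x : Fin n → R) :
    (alternantMatrix x 0).det = ∏ i, ∏ j ∈ Ioi i, (x i - x j) := by
  simp [alternantMatrix_zero, Matrix.det_projVandermonde]

theorem det_alternantMatrix_add_const (x : Fin n → R) (l : Fin n → ℕ) (k : ℕ) :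
    (alternantMatrix x fun j => l j + k).det = (∏ i, x i) ^ k * (alternantMatrix x l).det := by
  rw [← prod_pow, ← Matrix.det_mul_column]
  congr 1
  ext i j
  simp only [alternantMatrix, Matrix.of_apply, ← pow_add]
  congr 1
  ring

theorem alternantMatrix_snoc_zero_last (x : Fin (n + 1) → R) (l : Fin n → ℕ) (i : Fin (n + 1)) :
    alternantMatrix x (Fin.snoc l 0 : Fin (n + 1) → ℕ) i (Fin.last n) = 1 := by
  simp [alternantMatrix]

theorem det_submatrix_alternantMatrix_snoc_zero (x : Fin (n + 1) → R) (l : Fin n → ℕ)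
    (i : Fin (n + 1)) :
    ((alternantMatrix x (Fin.snoc l 0 : Fin (n + 1) → ℕ)).submatrix
        i.succAbove (Fin.last n).succAbove).det =
      (∏ a, x (i.succAbove a)) * (alternantMatrix (x ∘ i.succAbove) l).det := by
  rw [← Matrix.det_mul_column]
  congr 1
  ext a b
  simp only [alternantMatrix, Matrix.submatrix_apply, Matrix.of_apply, Fin.succAbove_last,
    Fin.snoc_castSucc, Fin.val_castSucc, Function.comp_apply, ← pow_succ']
  congr 1
  lia

theorem det_updateCol_alternantMatrix_snoc_zero (x : Fin (n + 1) → R) (l : Fin n → ℕ)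
    (c : Fin (n + 1) → R) :
    ((alternantMatrix x (Fin.snoc l 0 : Fin (n + 1) → ℕ)).updateCol (Fin.last n) c).det =
      ∑ i : Fin (n + 1), (-1) ^ ((i : ℕ) + n) * c i *
        ((∏ a, x (i.succAbove a)) * (alternantMatrix (x ∘ i.succAbove) l).det) := by
  simp only [Matrix.det_succ_column _ (Fin.last n), Matrix.updateCol_self,
    Matrix.submatrix_updateCol_succAbove, det_submatrix_alternantMatrix_snoc_zero, Fin.val_last]

theorem det_alternantMatrix_snoc_zero (x : Fin (n + 1) → R) (l : Fin n → ℕ) :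
    (alternantMatrix x (Fin.snoc l 0 : Fin (n + 1) → ℕ)).det =
      ∑ i : Fin (n + 1), (-1) ^ ((i : ℕ) + n) *
        ((∏ a, x (i.succAbove a)) * (alternantMatrix (x ∘ i.succAbove) l).det) := by
  have hcol := Matrix.updateCol_eq_self
    (alternantMatrix x (Fin.snoc l 0 : Fin (n + 1) → ℕ)) (Fin.last n)
  simp only [alternantMatrix_snoc_zero_last] at hcol
  simpa [hcol] using det_updateCol_alternantMatrix_snoc_zero x l fun _ => 1

theorem det_updateCol_alternantMatrix_zero_eval (x : Fin (n + 1) → R) {p : R[X]}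
    (hp : p.natDegree ≤ n) :
    ((alternantMatrix x 0).updateCol (Fin.last n) fun i => p.eval (x i)).det =
      p.eval 0 * (alternantMatrix x 0).det := by
  have hcol (i : Fin (n + 1)) :
      p.eval (x i) = ∑ j : Fin (n + 1), p.coeff (Fin.rev j) • alternantMatrix x 0 i j := by
    rw [eval_eq_sum_range' (Nat.lt_succ_of_le hp), ← Fin.sum_univ_eq_sum_range
      fun j => p.coeff j * x i ^ j, ← Equiv.sum_comp Fin.revPerm]
    simp [alternantMatrix_zero, Matrix.projVandermonde_apply]
  simp only [hcol, Matrix.det_updateCol_sum]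
  simp [coeff_zero_eq_eval_zero]

end Alternant

section LittlewoodProd

variable {R : Type*} [CommRing R] {n : ℕ}

theorem prod_prod_Ioi_succAbove {M : Type*} [CommMonoid M] (p : Fin (n + 1))
    {f : Fin (n + 1) → Fin (n + 1) → M} (hf : ∀ i j, f i j = f j i) :
    ∏ i, ∏ j ∈ Ioi i, f i j =
      (∏ a, f p (p.succAbove a)) *
        ∏ a : Fin n, ∏ b ∈ Ioi a, f (p.succAbove a) (p.succAbove b) := by
  have hite {m : ℕ} (g : Fin m → Fin m → M) :
      ∏ i, ∏ j ∈ Ioi i, g i j = ∏ i, ∏ j, if i < j then g i j else 1 := by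
    simp only [← prod_filter, filter_lt_eq_Ioi]
  have hp (a : Fin n) :
      ((if p < p.succAbove a then f p (p.succAbove a) else 1) *
        if p.succAbove a < p then f (p.succAbove a) p else 1) = f p (p.succAbove a) := by
    rcases (Fin.succAbove_ne p a).lt_or_gt with h | h <;> simp [h, h.not_gt, hf]
  simp only [hite, Fin.prod_univ_succAbove _ p, prod_mul_distrib, lt_self_iff_false, if_false,
    one_mul, (Fin.strictMono_succAbove p).lt_iff_lt, ← mul_assoc]
  simp only [← prod_mul_distrib, hp]

/-- The denominator `∏ (1 - x i) * ∏ i < j, (1 - x i * x j)` of Littlewood's formula. -/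
def littlewoodProd (x : Fin n → R) : R :=
  (∏ i, (1 - x i)) * ∏ i, ∏ j ∈ Ioi i, (1 - x i * x j)

theorem littlewoodProd_succAbove (x : Fin (n + 1) → R) (i : Fin (n + 1)) :
    littlewoodProd x =
      (1 - x i) * (∏ a, (1 - x i * x (i.succAbove a))) * littlewoodProd (x ∘ i.succAbove) := by
  simp only [littlewoodProd, Function.comp_apply, Fin.prod_univ_succAbove (fun k => 1 - x k) i,
    prod_prod_Ioi_succAbove i fun j k => congrArg (1 - ·) (mul_comm (x j) (x k))]
  ring

theorem det_alternantMatrix_snoc_zero_mul_littlewoodProd (x : Fin (n + 1) → R) (l : Fin n → ℕ) :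
    (alternantMatrix x (Fin.snoc l 0 : Fin (n + 1) → ℕ)).det * littlewoodProd x =
      ∑ i : Fin (n + 1), (-1) ^ ((i : ℕ) + n) *
        ((1 - x i) * ∏ a, (1 - x i * x (i.succAbove a))) * (∏ a, x (i.succAbove a)) *
          ((alternantMatrix (x ∘ i.succAbove) l).det * littlewoodProd (x ∘ i.succAbove)) := by
  rw [det_alternantMatrix_snoc_zero, sum_mul]
  refine sum_congr rfl fun i _ => ?_
  rw [littlewoodProd_succAbove x i]
  ring

theorem sum_succAbove_mul_det_alternantMatrix_zero (x : Fin (n + 1) → R) :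
    ∑ i : Fin (n + 1), (-1) ^ ((i : ℕ) + n) *
        ((1 - x i) * ∏ a, (1 - x i * x (i.succAbove a))) * (∏ a, x (i.succAbove a)) *
          (alternantMatrix (x ∘ i.succAbove) 0).det =
      (1 - ∏ i, x i) * (alternantMatrix x 0).det := by
  have heval (i : Fin (n + 1)) : (reflectionQuotient univ x).eval (x i) =
      (1 - x i) * ∏ a, (1 - x i * x (i.succAbove a)) := by
    rw [Fin.univ_succAbove n i, eval_reflectionQuotient_cons, prod_map]
    rfl
  have hsnoc : (Fin.snoc (0 : Fin n → ℕ) 0 : Fin (n + 1) → ℕ) = 0 := by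
    ext j
    cases j using Fin.lastCases <;> simp
  have hdet := det_updateCol_alternantMatrix_zero_eval x
    (p := reflectionQuotient univ x) (by simpa using natDegree_reflectionQuotient_le univ x)
  rw [eval_zero_reflectionQuotient] at hdet
  rw [← hdet, ← hsnoc, det_updateCol_alternantMatrix_snoc_zero]
  simp only [heval, mul_assoc]

end LittlewoodProd

section HasSum

theorem antitone_snoc_zero {n : ℕ} {l : Fin n → ℕ} (hl : Antitone l) :
    Antitone (Fin.snoc l 0 : Fin (n + 1) → ℕ) := by
  intro i j hij
  cases j using Fin.lastCases with
  | last => simp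
  | cast j =>
    cases i using Fin.lastCases with
    | last => exact absurd hij j.castSucc_lt_last.not_ge
    | cast i => simpa using hl (by simpa using hij)

/-- A partition with at most `n + 1` parts amounts to its last part together with the partition
with at most `n` parts obtained by subtracting the last part from the others. -/
def antitoneFinSuccEquiv (n : ℕ) :
    ℕ × {l : Fin n → ℕ // Antitone l} ≃ {l : Fin (n + 1) → ℕ // Antitone l} where
  toFun q := ⟨fun j => (Fin.snoc q.2.1 0 : Fin (n + 1) → ℕ) j + q.1,
    (antitone_snoc_zero q.2.2).add_const q.1⟩
  invFun l := (l.1 (Fin.last n), ⟨fun a => l.1 a.castSucc - l.1 (Fin.last n),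
    fun _ _ hab => Nat.sub_le_sub_right (l.2 (Fin.castSucc_le_castSucc_iff.2 hab)) _⟩)
  left_inv q := by simp
  right_inv l := by
    ext j
    cases j using Fin.lastCases with
    | last => simp
    | cast j => simpa using Nat.sub_add_cancel (l.2 (Fin.le_last j.castSucc))

theorem nonarchimedeanRing_of_isLinearTopology {R : Type*} [Ring R] [TopologicalSpace R]
    [IsTopologicalRing R] [IsLinearTopology R R] : NonarchimedeanRing R where
  is_nonarchimedean U hU := by
    obtain ⟨I, hI, hIU⟩ := (IsLinearTopology.hasBasis_ideal (R := R)).mem_iff.1 hU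
    exact ⟨⟨I.toAddSubgroup, AddSubgroup.isOpen_of_mem_nhds _ hI⟩, hIU⟩

theorem isTopologicallyNilpotent_prod {M ι : Type*} [CommMonoidWithZero M] [TopologicalSpace M]
    [ContinuousMul M] {s : Finset ι} (hs : s.Nonempty) {x : ι → M}
    (hx : ∀ i ∈ s, IsTopologicallyNilpotent (x i)) :
    IsTopologicallyNilpotent (∏ i ∈ s, x i) := by
  simpa [IsTopologicallyNilpotent, prod_pow, hs.ne_empty, hs.card_ne_zero] using
    tendsto_finsetProd s hx

theorem summable_pow_of_isTopologicallyNilpotent {R : Type*} [Ring R] [UniformSpace R]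
    [IsUniformAddGroup R] [NonarchimedeanRing R] [CompleteSpace R] {y : R}
    (hy : IsTopologicallyNilpotent y) : Summable (y ^ · : ℕ → R) :=
  NonarchimedeanAddGroup.summable_of_tendsto_cofinite_zero (by rwa [Nat.cofinite_eq_atTop])

theorem littlewood_sum_all_partitions_general {R : Type*} [CommRing R] [UniformSpace R]
    [IsUniformAddGroup R] [NonarchimedeanRing R] [CompleteSpace R] [T2Space R] {n : ℕ}
    (x : Fin n → R) (hx : ∀ i, IsTopologicallyNilpotent (x i)) :
    HasSum (fun l : {l : Fin n → ℕ // Antitone l} =>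
        (alternantMatrix x l).det * littlewoodProd x)
      (∏ i, ∏ j ∈ Ioi i, (x i - x j)) := by
  rw [← det_alternantMatrix_zero]
  induction n with
  | zero =>
    have : Inhabited {l : Fin 0 → ℕ // Antitone l} := ⟨⟨0, antitone_const⟩⟩
    have : Unique {l : Fin 0 → ℕ // Antitone l} := .mk' _
    simp [littlewoodProd, hasSum_unique]
  | succ n ih =>
    have hgeom : Summable ((∏ i, x i) ^ · : ℕ → R) :=
      summable_pow_of_isTopologicallyNilpotent <|
        isTopologicallyNilpotent_prod univ_nonempty fun i _ => hx i
    have hexpand := hasSum_sum fun (i : Fin (n + 1)) (_ : i ∈ univ) =>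
      (ih (x ∘ i.succAbove) fun _ => hx _).mul_left ((-1) ^ ((i : ℕ) + n) *
        ((1 - x i) * ∏ a, (1 - x i * x (i.succAbove a))) * ∏ a, x (i.succAbove a))
    simp only [← det_alternantMatrix_snoc_zero_mul_littlewoodProd,
      sum_succAbove_mul_det_alternantMatrix_zero] at hexpand
    have hprod := hgeom.hasSum.mul_of_nonarchimedean hexpand
    rw [← mul_assoc, hgeom.tsum_pow_mul_one_sub, one_mul] at hprod
    refine (antitoneFinSuccEquiv n).hasSum_iff.1 (hprod.congr_fun fun q => ?_)
    simp [antitoneFinSuccEquiv, det_alternantMatrix_add_const, mul_assoc]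

end HasSum

/-- **Littlewood's formula** `∑_λ s_λ = ∏ 1/(1-x_i) ∏_{i<j} 1/(1-x_i x_j)` with
denominators cleared, as a convergent sum in `ℚ[[x_1,…,x_n]]` (with the product topology
coming from the discrete topology on the coefficients, so that convergence means that
each coefficient is eventually constant along partial sums).  Partitions with at most
`n` parts are encoded as antitone functions `Fin n → ℕ`; with 0-indexed `j`, the
exponent `λ_j + n - j` becomes `l j + (n - 1 - j)`. -/
theorem littlewood_sum_all_partitions (n : ℕ) (hn : 0 < n) :
    letI : TopologicalSpace ℚ := ⊥
    letI : TopologicalSpace (MvPowerSeries (Fin n) ℚ) :=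
      inferInstanceAs (TopologicalSpace ((Fin n →₀ ℕ) → ℚ))
    HasSum
      (fun l : {l : Fin n → ℕ // ∀ i j : Fin n, i ≤ j → l j ≤ l i} =>
        Matrix.det (Matrix.of fun i j : Fin n =>
            (MvPowerSeries.X i : MvPowerSeries (Fin n) ℚ) ^ (l.1 j + (n - 1 - (j : ℕ)))) *
          (∏ i : Fin n, (1 - MvPowerSeries.X i)) *
          ∏ i : Fin n, ∏ j ∈ Finset.Ioi i,
            (1 - MvPowerSeries.X i * MvPowerSeries.X j))
      (∏ i : Fin n, ∏ j ∈ Finset.Ioi i,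
        (MvPowerSeries.X i - MvPowerSeries.X j)) := by
  let : UniformSpace ℚ := ⊥
  have : DiscreteTopology ℚ := ⟨rfl⟩
  open scoped MvPowerSeries.WithPiTopology in
  have := nonarchimedeanRing_of_isLinearTopology (R := MvPowerSeries (Fin n) ℚ)
  exact (littlewood_sum_all_partitions_general
    (MvPowerSeries.X : Fin n → MvPowerSeries (Fin n) ℚ) fun i =>
      MvPowerSeries.WithPiTopology.isTopologicallyNilpotent_of_constantCoeff_zero
        (MvPowerSeries.constantCoeff_X i)).congr_fun fun _ => mul_assoc _ _ _
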